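/- Let k be an algebraically closed field of characteristic 0, let n ≥ 2 and d ≥ 2, and let F₁, F₂ ∈ k[x₀,…,x_{n+1}] be smooth homogeneous polynomials of degree d. If there exists a projective linear automorphism φ of ℙ^{n+2}(k) (i.e. the map of the projectivization of k^{n+3} induced by some element of GL_{n+3}(k)) mapping the projective zero locus of x_{n+2}^d − F₂ bijectively onto the projective zero locus of x_{n+2}^d − F₁, then there exists a projective linear automorphism ψ of ℙ^{n+1}(k) mapping the projective zero locus of F₂ bijectively onto the projective zero locus of F₁. -/

import Mathlib

open MvPolynomial

/-- A polynomial is smooth if the only common zero of its partial derivatives is the origin. -/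
def SmoothPoly {k : Type*} [CommRing k] {N : ℕ} (F : MvPolynomial (Fin N) k) : Prop :=
  ∀ x : Fin N → k, (∀ i, MvPolynomial.eval x (MvPolynomial.pderiv i F) = 0) → x = 0

/-- The projective zero locus of `F` in `ℙ^{N-1}(k)`, the projectivization of `k^N`. -/
def projZeroLocus {k : Type*} [Field k] {N : ℕ} (F : MvPolynomial (Fin N) k) :
    Set (Projectivization k (Fin N → k)) :=
  {p | MvPolynomial.eval p.rep F = 0}

/-- The projective linear automorphism of `ℙ^{N-1}(k)` induced by `M ∈ GL_N(k)`. -/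
noncomputable def projLinMap {k : Type*} [Field k] {N : ℕ} (M : GL (Fin N) k) :
    Projectivization k (Fin N → k) → Projectivization k (Fin N → k) :=
  Projectivization.map (M : Matrix (Fin N) (Fin N) k).mulVecLin
    (by
      rw [Matrix.coe_mulVecLin]
      exact Matrix.mulVec_injective_iff_isUnit.2 M.isUnit)

/-!
Let `Gᵢ = x_m ^ d - Fᵢ`. If `V(G₂)` is mapped onto `V(G₁)` by a linear automorphism `L`, then
comparing `G₁ ∘ L` with `G₂` on the lines where `G₂` has `d` distinct roots shows `G₁ ∘ L = c G₂`,
and rescaling `L` makes `c = 1`.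

Now `G₁` is in two ways the `d`-th power of a coordinate plus a function invariant under translation
along an axis `e` resp. `v`: with the coordinate `w = x_m`, and with the coordinate `l` which `L`
transports from `x_m`. Computing the mixed second derivative of `G₁` along `e` and `v` in both ways
gives `l(e) l ^ (d - 2) = w(v) w ^ (d - 2)`. Hence either `w` is proportional to `l`, or
`l(e) = w(v)` and in addition `d = 2` or `w(v) = 0`. In the latter case a reflection along `e - v`
(along `e + v` if `w(v) = 1`) preserves `G₁` and exchanges `w` with `l` up to sign. So after
composing `L` with an automorphism of `G₁` it preserves the hyperplane `x_m = 0`, and restricting to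
this hyperplane gives an isomorphism of `F₂` with `F₁`.
-/

section Evaluation

variable {σ k : Type*} [CommSemiring k] {d : ℕ} {F : MvPolynomial σ k}

theorem eval_smul_of_isHomogeneous (hF : F.IsHomogeneous d) (c : k) (x : σ → k) :
    eval (c • x) F = c ^ d * eval x F := by
  rw [eval_eq, eval_eq, Finset.mul_sum]
  refine Finset.sum_congr rfl fun m hm ↦ ?_
  have hm : ∑ i ∈ m.support, m i = d := by
    rw [← Finsupp.degree_apply]
    by_contra hdeg
    exact mem_support_iff.1 hm (hF.coeff_eq_zero hdeg)
  simp only [Pi.smul_apply, smul_eq_mul, mul_pow, Finset.prod_mul_distrib,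
    Finset.prod_pow_eq_pow_sum, hm]
  ring

theorem eval_zero_of_isHomogeneous (hF : F.IsHomogeneous d) (hd : d ≠ 0) : eval 0 F = 0 := by
  simpa [zero_pow hd] using eval_smul_of_isHomogeneous hF 0 0

theorem exists_polynomial_eval_add_smul (hF : F.totalDegree ≤ d) (x y : σ → k) :
    ∃ p : Polynomial k, p.natDegree ≤ d ∧ ∀ t, p.eval t = eval (x + t • y) F := by
  refine ⟨aeval (fun i ↦ Polynomial.C (y i) * Polynomial.X + Polynomial.C (x i)) F, ?_,
    fun t ↦ ?_⟩
  · simpa using aeval_natDegree_le F hF _ fun _ ↦ Polynomial.natDegree_linear_le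
  · rw [aeval_def, polynomial_eval_eval₂, eval]
    congr 1
    · ext; simp
    · ext i
      simp only [Polynomial.eval_add, Polynomial.eval_mul, Polynomial.eval_C, Polynomial.eval_X,
        Pi.add_apply, Pi.smul_apply, smul_eq_mul]
      ring

end Evaluation

section Univariate

theorem sum_mul_pow_pred_eq_zero {k ι : Type*} [CommRing k] [IsDomain k] [Infinite k] [Fintype ι]
    {n : ℕ} (hn : (n : k) ≠ 0) (a u v : ι → k) {c : k}
    (h : ∀ t, ∑ i, a i * (u i + t * v i) ^ n = c) :
    ∑ i, a i * v i * u i ^ (n - 1) = 0 := by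
  have heq : ∑ i, Polynomial.C (a i) * (Polynomial.C (u i) + Polynomial.X * Polynomial.C (v i)) ^ n
      = Polynomial.C c :=
    Polynomial.funext fun t ↦ by
      simpa only [Polynomial.eval_finsetSum, Polynomial.eval_mul, Polynomial.eval_C,
        Polynomial.eval_pow, Polynomial.eval_add, Polynomial.eval_X] using h t
  have hderiv := congrArg (fun p ↦ p.derivative.eval 0) heq
  simp only [Polynomial.derivative_sum, Polynomial.derivative_pow, Polynomial.eval_finsetSum,
    Polynomial.derivative_mul, Polynomial.derivative_add, Polynomial.derivative_C,
    Polynomial.derivative_X, Polynomial.eval_mul, Polynomial.eval_add, Polynomial.eval_pow,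
    Polynomial.eval_C, Polynomial.eval_X, Polynomial.eval_zero, zero_mul, zero_add, add_zero,
    mul_zero, one_mul] at hderiv
  refine (mul_eq_zero.1 ?_).resolve_left hn
  rw [Finset.mul_sum, ← hderiv]
  exact Finset.sum_congr rfl fun i _ ↦ by ring

theorem exists_eq_C_mul_of_separable {k : Type*} [Field k] [IsAlgClosed k] {p q : Polynomial k}
    (hq : q.Separable) (hdeg : p.natDegree ≤ q.natDegree) (h : ∀ s, q.eval s = 0 → p.eval s = 0) :
    ∃ r, p = Polynomial.C r * q := by
  rcases eq_or_ne p 0 with rfl | hp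
  · exact ⟨0, by simp⟩
  have hroots : q.roots ≤ p.roots :=
    (Multiset.le_iff_subset (Polynomial.nodup_roots hq)).2 fun s hs ↦
      (Polynomial.mem_roots hp).2 (h s (Polynomial.isRoot_of_mem_roots hs))
  obtain ⟨r, rfl⟩ := (IsAlgClosed.dvd_iff_roots_le_roots hq.ne_zero hp).2 hroots
  have hr : r.natDegree = 0 := by
    rw [Polynomial.natDegree_mul hq.ne_zero (right_ne_zero_of_mul hp)] at hdeg
    omega
  exact ⟨r.coeff 0, by rw [← Polynomial.eq_C_of_natDegree_eq_zero hr, mul_comm]⟩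

end Univariate

section Projective

variable {k : Type*} [Field k] {N d : ℕ} {F F₁ F₂ : MvPolynomial (Fin N) k}

theorem mk_mem_projZeroLocus_iff (hF : F.IsHomogeneous d) (v : Fin N → k) (hv : v ≠ 0) :
    Projectivization.mk k v hv ∈ projZeroLocus F ↔ eval v F = 0 := by
  obtain ⟨a, ha⟩ := Projectivization.exists_smul_eq_mk_rep k v hv
  rw [projZeroLocus, Set.mem_ofPred_eq, ← ha, Units.smul_def, eval_smul_of_isHomogeneous hF]
  simp

theorem projLinMap_bijective (M : GL (Fin N) k) : Function.Bijective (projLinMap M) :=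
  MulAction.bijective (Matrix.GeneralLinearGroup.toLin M)

theorem bijOn_projLinMap_iff (hd : d ≠ 0) (hF₁ : F₁.IsHomogeneous d) (hF₂ : F₂.IsHomogeneous d)
    (M : GL (Fin N) k) :
    Set.BijOn (projLinMap M) (projZeroLocus F₂) (projZeroLocus F₁) ↔
      ∀ x, eval (M.val.mulVec x) F₁ = 0 ↔ eval x F₂ = 0 := by
  have hM := projLinMap_bijective M
  have mem_iff (x : Fin N → k) (hx : x ≠ 0) :
      projLinMap M (.mk k x hx) ∈ projZeroLocus F₁ ↔ eval (M.val.mulVec x) F₁ = 0 :=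
    mk_mem_projZeroLocus_iff hF₁ _ _
  refine ⟨fun h x ↦ ?_, fun h ↦ (Equiv.ofBijective _ hM).bijOn fun p ↦ ?_⟩
  · rcases eq_or_ne x 0 with rfl | hx
    · rw [Matrix.mulVec_zero, eval_zero_of_isHomogeneous hF₁ hd,
        eval_zero_of_isHomogeneous hF₂ hd]
    · rw [← mem_iff x hx, ← mk_mem_projZeroLocus_iff hF₂ x hx, ← h.image_eq,
        hM.injective.mem_set_image]
  · induction p using Projectivization.ind with
    | h x hx =>
      rw [Equiv.ofBijective_apply, mem_iff, mk_mem_projZeroLocus_iff hF₂, h]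

theorem exists_bijOn_projLinMap_iff (hd : d ≠ 0) (hF₁ : F₁.IsHomogeneous d)
    (hF₂ : F₂.IsHomogeneous d) :
    (∃ M : GL (Fin N) k, Set.BijOn (projLinMap M) (projZeroLocus F₂) (projZeroLocus F₁)) ↔
      ∃ L : (Fin N → k) ≃ₗ[k] (Fin N → k), ∀ x, eval (L x) F₁ = 0 ↔ eval x F₂ = 0 := by
  let toEquiv := (Matrix.GeneralLinearGroup.toLin (n := Fin N) (R := k)).trans
    (LinearMap.GeneralLinearGroup.generalLinearEquiv k (Fin N → k))
  simp only [bijOn_projLinMap_iff hd hF₁ hF₂]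
  exact (toEquiv.surjective.exists
    (p := fun L ↦ ∀ x, eval (L x) F₁ = 0 ↔ eval x F₂ = 0)).symm

end Projective

section CyclicForm

/-- A function `G` on a module is a cyclic form of degree `d` with coordinate `w` and axis
`e` if `w e = 1` and `G - w ^ d` is invariant under translation along `e`. Identifying `V` with
`ker w × k` by means of `e`, this says `G (y, t) = t ^ d - F y` for some `F`, the equation of the
`d`-fold cyclic cover branched along `F`. -/
structure IsCyclicForm {k V : Type*} [CommRing k] [AddCommGroup V] [Module k V] (d : ℕ)
    (G : V → k) (w : Module.Dual k V) (e : V) : Prop where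
  apply_axis : w e = 1
  apply_add_smul (x : V) (t : k) : G (x + t • e) = G x + ((w x + t) ^ d - w x ^ d)

namespace IsCyclicForm

section CommRing

variable {k V : Type*} [CommRing k] [AddCommGroup V] [Module k V] {d : ℕ} {G : V → k}
  {w l : Module.Dual k V} {e v : V}

theorem comp_linearEquiv {V' : Type*} [AddCommGroup V'] [Module k V'] {G' : V' → k}
    (h : IsCyclicForm d G w e) (L : V ≃ₗ[k] V') (hL : ∀ x, G' (L x) = G x) :
    IsCyclicForm d G' (w ∘ₗ L.symm.toLinearMap) (L e) where
  apply_axis := by simpa using h.apply_axis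
  apply_add_smul x t := by
    rw [← L.apply_symm_apply x, ← map_smul, ← map_add, hL, hL, h.apply_add_smul]
    simp

theorem neg (h : IsCyclicForm d G w e) (hd : Even d) : IsCyclicForm d G (-w) (-e) where
  apply_axis := by simpa using h.apply_axis
  apply_add_smul x t := by
    rw [smul_neg, ← neg_smul, h.apply_add_smul, ← hd.neg_pow (w x + -t), LinearMap.neg_apply,
      hd.neg_pow (w x), neg_add, neg_neg]

section MixedDerivative

variable [IsDomain k] [Infinite k]

/- Up to the factor `d`, both sides are the increment along `e` of the derivative of `G`
along `v`. -/
theorem pow_pred_sub_pow_pred (hd : (d : k) ≠ 0) (h : IsCyclicForm d G w e)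
    (h' : IsCyclicForm d G l v) (x : V) (t : k) :
    (l x + t * l e) ^ (d - 1) - l x ^ (d - 1) =
      w v * ((w x + t) ^ (d - 1) - w x ^ (d - 1)) := by
  have hcomm (s : k) : (l x + t * l e + s) ^ d - (l x + s) ^ d
      - (w x + t + s * w v) ^ d + (w x + s * w v) ^ d
      = (l x + t * l e) ^ d - l x ^ d - (w x + t) ^ d + w x ^ d := by
    have hG : G (x + t • e + s • v) = G (x + s • v + t • e) := by rw [add_right_comm]
    rw [h'.apply_add_smul, h.apply_add_smul, h.apply_add_smul, h'.apply_add_smul] at hG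
    simp only [map_add, map_smul, smul_eq_mul] at hG
    linear_combination hG
  have := sum_mul_pow_pred_eq_zero hd ![1, -1, -1, 1]
    ![l x + t * l e, l x, w x + t, w x] ![1, 1, w v, w v] (fun s ↦ by
      simpa [Fin.sum_univ_four, ← sub_eq_add_neg] using hcomm s)
  simp only [Fin.sum_univ_four, Matrix.cons_val] at this
  linear_combination this

/- Up to the factor `d * (d - 1)`, both sides are the mixed second derivative of `G` along
`e` and `v`. -/
theorem mul_pow_eq_mul_pow (hd₀ : (d : k) ≠ 0) (hd₁ : (d : k) ≠ 1) (h : IsCyclicForm d G w e)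
    (h' : IsCyclicForm d G l v) (x : V) :
    l e * l x ^ (d - 2) = w v * w x ^ (d - 2) := by
  have hd : ((d - 1 : ℕ) : k) ≠ 0 := by
    rw [Nat.cast_pred (Nat.pos_of_ne_zero fun h ↦ hd₀ (by simp [h]))]
    exact sub_ne_zero.2 hd₁
  have := sum_mul_pow_pred_eq_zero hd ![1, -w v] ![l x, w x] ![l e, 1]
    (c := l x ^ (d - 1) - w v * w x ^ (d - 1)) (fun t ↦ by
      simp only [Fin.sum_univ_two, Matrix.cons_val]
      linear_combination pow_pred_sub_pow_pred hd₀ h h' x t)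
  simp only [Fin.sum_univ_two, Matrix.cons_val, Nat.sub_sub] at this
  linear_combination this

theorem axis_pairing_eq (hd₀ : (d : k) ≠ 0) (hd₁ : (d : k) ≠ 1) (h : IsCyclicForm d G w e)
    (h' : IsCyclicForm d G l v) {x : V} (hlx : l x = 0) (hwx : w x ≠ 0) :
    l e = w v ∧ (d = 2 ∨ w v = 0) := by
  have hmix := mul_pow_eq_mul_pow hd₀ hd₁ h h'
  have hwv : d = 2 ∨ w v = 0 := by
    refine or_iff_not_imp_left.2 fun hd ↦ ?_
    have hd2 : d - 2 ≠ 0 := by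
      have : d ≠ 0 := by rintro rfl; simp at hd₀
      have : d ≠ 1 := by rintro rfl; simp at hd₁
      omega
    simpa [hlx, hd2, hwx] using (hmix x).symm
  refine ⟨?_, hwv⟩
  have hv := hmix v
  rw [h'.apply_axis, one_pow, mul_one] at hv
  rcases hwv with rfl | hwv
  · simpa using hv
  · simpa [hwv] using hv

end MixedDerivative

end CommRing

variable {k V : Type*} [Field k] [AddCommGroup V] [Module k V] {d : ℕ} {G : V → k}
  {w l : Module.Dual k V} {e v : V}

theorem exists_linearEquiv_swap (h : IsCyclicForm d G w e) (h' : IsCyclicForm d G l v)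
    (hle : l e = w v) (hwv : w v ≠ 1) (hd : d = 2 ∨ w v = 0) :
    ∃ T : V ≃ₗ[k] V, (∀ x, G (T x) = G x) ∧ ∀ x, w (T x) = l x := by
  have hwv' : 1 - w v ≠ 0 := sub_ne_zero.2 hwv.symm
  let f : Module.Dual k V := (1 - w v)⁻¹ • (w - l)
  have hf (x : V) : f x * (1 - w v) = w x - l x := by
    rw [LinearMap.smul_apply, LinearMap.sub_apply, smul_eq_mul, mul_right_comm,
      inv_mul_cancel₀ hwv', one_mul]
  have hfe : f (e - v) = 2 := by
    refine mul_right_cancel₀ hwv' ?_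
    rw [hf, map_sub, map_sub, h.apply_axis, h'.apply_axis, hle]
    ring
  have hT (x : V) : Module.reflection hfe x = x + (-f x) • e + f x • v := by
    rw [Module.reflection_apply]
    module
  refine ⟨Module.reflection hfe, fun x ↦ ?_, fun x ↦ ?_⟩
  · rw [hT, h'.apply_add_smul, h.apply_add_smul, map_add, map_smul, smul_eq_mul, hle]
    rcases hd with rfl | hwv
    · linear_combination (2 * f x) * hf x
    · have hfx : f x = w x - l x := by simpa [hwv] using hf x
      rw [hfx, hwv]
      ring
  · rw [hT, map_add, map_add, map_smul, map_smul, smul_eq_mul, smul_eq_mul, h.apply_axis]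
    linear_combination -hf x

theorem exists_linearEquiv_coordinate_eq [Infinite k] (hd₀ : (d : k) ≠ 0) (hd₁ : (d : k) ≠ 1)
    (h : IsCyclicForm d G w e) (h' : IsCyclicForm d G l v) :
    ∃ T : V ≃ₗ[k] V, (∀ x, G (T x) = G x) ∧ ∃ c : k, ∀ x, w (T x) = c * l x := by
  by_cases hker : ∀ x, l x = 0 → w x = 0
  · refine ⟨.refl k V, fun _ ↦ rfl, w v, fun x ↦ ?_⟩
    have := hker (x - l x • v) (by simp [h'.apply_axis])
    rw [map_sub, map_smul, smul_eq_mul, sub_eq_zero] at this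
    rw [LinearEquiv.refl_apply, this, mul_comm]
  push Not at hker
  obtain ⟨x, hlx, hwx⟩ := hker
  obtain ⟨hle, hd⟩ := axis_pairing_eq hd₀ hd₁ h h' hlx hwx
  by_cases hwv : w v = 1
  · -- Here `w (e - v) = 0`, so no reflection along `e - v` exchanges `w` and `l`; one along
    -- `e + v` exchanges `w` and `-l`.
    obtain rfl : d = 2 := hd.resolve_right (by simp [hwv])
    have hne : w (-v) ≠ 1 := by
      rw [map_neg, hwv]
      intro hneg
      exact hd₀ (by push_cast; linear_combination -hneg)
    obtain ⟨T, hTG, hTw⟩ :=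
      h.exists_linearEquiv_swap (h'.neg even_two) (by simp [hle]) hne (.inl rfl)
    exact ⟨T, hTG, -1, by simpa using hTw⟩
  · obtain ⟨T, hTG, hTw⟩ := h.exists_linearEquiv_swap h' hle hwv hd
    exact ⟨T, hTG, 1, by simpa using hTw⟩

end IsCyclicForm

end CyclicForm

section CyclicCover

/-- The polynomial `x_m ^ d - F(x₀, …, x_{m-1})` defining the `d`-fold cyclic cover branched along
the zero locus of `F`. -/
noncomputable def cyclicCover {k : Type*} [CommRing k] {m : ℕ} (d : ℕ)
    (F : MvPolynomial (Fin m) k) : MvPolynomial (Fin (m + 1)) k :=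
  X (Fin.last m) ^ d - rename Fin.castSucc F

section CommRing

variable {k : Type*} [CommRing k] {m d : ℕ} {F : MvPolynomial (Fin m) k}

theorem isHomogeneous_cyclicCover (hF : F.IsHomogeneous d) : (cyclicCover d F).IsHomogeneous d :=
  (isHomogeneous_X_pow _ _).sub hF.rename_isHomogeneous

theorem eval_cyclicCover (F : MvPolynomial (Fin m) k) (x : Fin (m + 1) → k) :
    eval x (cyclicCover d F) = x (Fin.last m) ^ d - eval (x ∘ Fin.castSucc) F := by
  simp [cyclicCover, eval_rename]

theorem isCyclicForm_eval_cyclicCover (d : ℕ) (F : MvPolynomial (Fin m) k) :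
    IsCyclicForm d (fun x ↦ eval x (cyclicCover d F)) (LinearMap.proj (Fin.last m))
      (Pi.single (Fin.last m) 1) where
  apply_axis := by simp
  apply_add_smul x t := by
    have hx : (x + t • Pi.single (Fin.last m) 1) ∘ Fin.castSucc = x ∘ Fin.castSucc := by
      ext i
      simp [Fin.castSucc_ne_last]
    simp [eval_cyclicCover, hx]

end CommRing

variable {k : Type*} [Field k] {m d : ℕ} {F F₁ F₂ : MvPolynomial (Fin m) k}

/- With `x = y + t • e`, where `e` is the last basis vector and `y` has last coordinate zero, the
idea is to restrict `P` to the line `s ↦ t • e + s • y`: there it vanishes at the `d` roots of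
`F y * s ^ d = t ^ d`, and its value at `s = 0` is known. -/
theorem eval_eq_mul_eval_cyclicCover [IsAlgClosed k] (hd : (d : k) ≠ 0)
    {P : MvPolynomial (Fin (m + 1)) k} (hF : F.IsHomogeneous d) (hP : P.IsHomogeneous d)
    (h : ∀ x, eval x (cyclicCover d F) = 0 → eval x P = 0) {x : Fin (m + 1) → k}
    (hx : x (Fin.last m) ≠ 0) (hFx : eval (x ∘ Fin.castSucc) F ≠ 0) :
    eval x P = eval (Pi.single (Fin.last m) 1) P * eval x (cyclicCover d F) := by
  set t := x (Fin.last m) with ht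
  set a := eval (x ∘ Fin.castSucc) F with ha
  let e : Fin (m + 1) → k := Pi.single (Fin.last m) 1
  obtain ⟨p, hp_deg, hp⟩ :=
    exists_polynomial_eval_add_smul hP.totalDegree_le (t • e) (x - t • e)
  have hcover (s : k) : eval (t • e + s • (x - t • e)) (cyclicCover d F) = t ^ d - s ^ d * a := by
    have hinit : (t • e + s • (x - t • e)) ∘ Fin.castSucc = s • (x ∘ Fin.castSucc) := by
      ext i
      simp [e, Fin.castSucc_ne_last]
    rw [eval_cyclicCover, hinit, eval_smul_of_isHomogeneous hF, ← ha]
    simp [e, ← ht]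
  have hsep := Polynomial.separable_X_pow_sub_C (t ^ d / a) hd (div_ne_zero (pow_ne_zero d hx) hFx)
  obtain ⟨r, hr⟩ := exists_eq_C_mul_of_separable (p := p) hsep
    (by rwa [Polynomial.natDegree_X_pow_sub_C]) fun s hs ↦ by
      have hs : s ^ d = t ^ d / a := by simpa [sub_eq_zero] using hs
      rw [hp, h _ (by rw [hcover, hs, div_mul_cancel₀ _ hFx, sub_self])]
  have hpr (s : k) : p.eval s = r * (s ^ d - t ^ d / a) := by simp [hr]
  have hp₀ : p.eval 0 = t ^ d * eval e P := by
    rw [hp, zero_smul, add_zero, eval_smul_of_isHomogeneous hP]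
  have hp₁ : p.eval 1 = eval x P := by rw [hp, one_smul, add_sub_cancel]
  have hd₀ : d ≠ 0 := by rintro rfl; simp at hd
  have hr₀ : eval e P = -(r / a) := by
    refine mul_left_cancel₀ (pow_ne_zero d hx) ?_
    rw [← hp₀, hpr, zero_pow hd₀]
    ring
  rw [← hp₁, hpr, eval_cyclicCover, ← ht, ← ha, hr₀, one_pow]
  field_simp
  ring

theorem eq_C_mul_cyclicCover [IsAlgClosed k] (hd : (d : k) ≠ 0) (hF₀ : F ≠ 0)
    {P : MvPolynomial (Fin (m + 1)) k} (hF : F.IsHomogeneous d) (hP : P.IsHomogeneous d)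
    (h : ∀ x, eval x (cyclicCover d F) = 0 → eval x P = 0) :
    P = C (eval (Pi.single (Fin.last m) 1) P) * cyclicCover d F := by
  have hmul : X (Fin.last m) * rename Fin.castSucc F *
      (P - C (eval (Pi.single (Fin.last m) 1) P) * cyclicCover d F) = 0 := by
    refine MvPolynomial.funext fun x ↦ ?_
    by_cases hx : x (Fin.last m) = 0
    · simp [hx]
    by_cases hFx : eval (x ∘ Fin.castSucc) F = 0
    · simp [eval_rename, hFx]
    · simp [eval_eq_mul_eval_cyclicCover hd hF hP h hx hFx]
  have hne : X (Fin.last m) * rename Fin.castSucc F ≠ 0 :=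
    mul_ne_zero (X_ne_zero _)
      ((map_ne_zero_iff _ (rename_injective _ (Fin.castSucc_injective m))).2 hF₀)
  exact sub_eq_zero.1 ((mul_eq_zero.1 hmul).resolve_left hne)

theorem exists_eval_linearMap_eq_mul [IsAlgClosed k] {σ : Type*} {P : MvPolynomial σ k}
    (hd : (d : k) ≠ 0) (hF₀ : F ≠ 0) (hF : F.IsHomogeneous d) (hP : P.IsHomogeneous d)
    (L : (Fin (m + 1) → k) →ₗ[k] (σ → k))
    (h : ∀ x, eval x (cyclicCover d F) = 0 → eval (L x) P = 0) :
    ∃ c, ∀ x, eval (L x) P = c * eval x (cyclicCover d F) := by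
  let Q := bind₁ (LinearMap.toMatrix' L).toMvPolynomial P
  have hQ (x : Fin (m + 1) → k) : eval x Q = eval (L x) P := by
    rw [eval, eval₂Hom_bind₁]
    change eval (fun i ↦ eval x ((LinearMap.toMatrix' L).toMvPolynomial i)) P = _
    simp only [Matrix.toMvPolynomial_eval_eq_apply, LinearMap.toMatrix'_mulVec]
  have hQ_hom : Q.IsHomogeneous d := by
    simpa using hP.aeval _ (Matrix.toMvPolynomial_isHomogeneous (LinearMap.toMatrix' L))
  have hQ_eq := eq_C_mul_cyclicCover hd hF₀ hF hQ_hom fun x hx ↦ by rw [hQ, h x hx]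
  exact ⟨_, fun x ↦ by rw [← hQ, hQ_eq, map_mul, eval_C]⟩

theorem exists_linearEquiv_eval_cyclicCover_eq [IsAlgClosed k] (hd : (d : k) ≠ 0) (hF₀ : F₂ ≠ 0)
    (hF₁ : F₁.IsHomogeneous d) (hF₂ : F₂.IsHomogeneous d)
    (L : (Fin (m + 1) → k) ≃ₗ[k] (Fin (m + 1) → k))
    (hL : ∀ x, eval (L x) (cyclicCover d F₁) = 0 ↔ eval x (cyclicCover d F₂) = 0) :
    ∃ L' : (Fin (m + 1) → k) ≃ₗ[k] (Fin (m + 1) → k),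
      ∀ x, eval (L' x) (cyclicCover d F₁) = eval x (cyclicCover d F₂) := by
  have hd0 : d ≠ 0 := by rintro rfl; simp at hd
  have hcover₁ := isHomogeneous_cyclicCover hF₁
  obtain ⟨c, hc⟩ := exists_eval_linearMap_eq_mul hd hF₀ hF₂ hcover₁ L.toLinearMap
    fun x hx ↦ (hL x).2 hx
  have hc0 : c ≠ 0 := by
    rintro rfl
    have haxis := (isCyclicForm_eval_cyclicCover d F₂).apply_add_smul 0 1
    rw [(hL _).1 ((hc _).trans (zero_mul _)),
      eval_zero_of_isHomogeneous (isHomogeneous_cyclicCover hF₂) hd0] at haxis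
    simp [hd0] at haxis
  obtain ⟨b, hb⟩ := IsAlgClosed.exists_pow_nat_eq c⁻¹ (Nat.pos_of_ne_zero hd0)
  have hb0 : b ≠ 0 := by
    rintro rfl
    exact inv_ne_zero hc0 (by rw [← hb, zero_pow hd0])
  refine ⟨L.trans (.smulOfNeZero k _ b hb0), fun x ↦ ?_⟩
  calc eval (b • L x) (cyclicCover d F₁)
      = b ^ d * eval (L x) (cyclicCover d F₁) := eval_smul_of_isHomogeneous hcover₁ b (L x)
    _ = c⁻¹ * (c * eval x (cyclicCover d F₂)) := by rw [hb, ← hc, LinearEquiv.coe_coe]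
    _ = eval x (cyclicCover d F₂) := inv_mul_cancel_left₀ hc0 _

theorem exists_linearEquiv_restrict_last_eq_zero (Φ : (Fin (m + 1) → k) ≃ₗ[k] (Fin (m + 1) → k))
    (hΦ : ∀ x, x (Fin.last m) = 0 → Φ x (Fin.last m) = 0) :
    ∃ R : (Fin m → k) ≃ₗ[k] (Fin m → k), ∀ x, x (Fin.last m) = 0 →
      R (x ∘ Fin.castSucc) = Φ x ∘ Fin.castSucc := by
  let ι : (Fin m → k) →ₗ[k] (Fin (m + 1) → k) := Function.ExtendByZero.linearMap k Fin.castSucc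
  have hι_init (y : Fin m → k) : ι y ∘ Fin.castSucc = y :=
    Function.extend_comp (Fin.castSucc_injective m) y 0
  have hι_last (y : Fin m → k) : ι y (Fin.last m) = 0 :=
    Function.extend_apply' _ _ _ fun ⟨i, hi⟩ ↦ Fin.castSucc_ne_last i hi
  have ext_init {x x' : Fin (m + 1) → k} (hx : x (Fin.last m) = x' (Fin.last m))
      (hinit : x ∘ Fin.castSucc = x' ∘ Fin.castSucc) : x = x' :=
    funext <| Fin.lastCases hx (congrFun hinit)
  let R : (Fin m → k) →ₗ[k] (Fin m → k) := LinearMap.funLeft k k Fin.castSucc ∘ₗ Φ ∘ₗ ι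
  have hR : Function.Injective R := fun y y' hyy' ↦ by
    have hΦι : Φ (ι y) = Φ (ι y') :=
      ext_init (by rw [hΦ _ (hι_last y), hΦ _ (hι_last y')]) hyy'
    rw [← hι_init y, ← hι_init y', Φ.injective hΦι]
  refine ⟨.ofInjectiveEndo R hR, fun x hx ↦ ?_⟩
  have hιx : ι (x ∘ Fin.castSucc) = x := ext_init (by rw [hι_last, hx]) (hι_init _)
  change Φ (ι (x ∘ Fin.castSucc)) ∘ Fin.castSucc = _
  rw [hιx]

theorem exists_linearEquiv_eval_eq [IsAlgClosed k] (hd₀ : (d : k) ≠ 0) (hd₁ : (d : k) ≠ 1)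
    (hF₂₀ : F₂ ≠ 0) (hF₁ : F₁.IsHomogeneous d) (hF₂ : F₂.IsHomogeneous d)
    (L : (Fin (m + 1) → k) ≃ₗ[k] (Fin (m + 1) → k))
    (hL : ∀ x, eval (L x) (cyclicCover d F₁) = 0 ↔ eval x (cyclicCover d F₂) = 0) :
    ∃ R : (Fin m → k) ≃ₗ[k] (Fin m → k), ∀ y, eval (R y) F₁ = eval y F₂ := by
  obtain ⟨L', hL'⟩ := exists_linearEquiv_eval_cyclicCover_eq hd₀ hF₂₀ hF₁ hF₂ L hL
  obtain ⟨T, hTG, c, hTw⟩ := (isCyclicForm_eval_cyclicCover d F₁).exists_linearEquiv_coordinate_eq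
    hd₀ hd₁ ((isCyclicForm_eval_cyclicCover d F₂).comp_linearEquiv L' hL')
  have hlast (x : Fin (m + 1) → k) (hx : x (Fin.last m) = 0) : T (L' x) (Fin.last m) = 0 := by
    simpa [hx] using hTw (L' x)
  obtain ⟨R, hR⟩ := exists_linearEquiv_restrict_last_eq_zero (L'.trans T) hlast
  have hRF (x : Fin (m + 1) → k) (hx : x (Fin.last m) = 0) :
      eval (R (x ∘ Fin.castSucc)) F₁ = eval (x ∘ Fin.castSucc) F₂ := by
    have hcover := (hTG (L' x)).trans (hL' x)
    rw [eval_cyclicCover, eval_cyclicCover, hlast x hx, hx] at hcover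
    rw [hR x hx]
    exact sub_right_injective hcover
  refine ⟨R, fun y ↦ ?_⟩
  simpa [Fin.snoc_comp_castSucc] using hRF (Fin.snoc y 0) (Fin.snoc_last _ _)

end CyclicCover

theorem cyclic_cover_determines_hypersurface_proj_general {k : Type*} [Field k] [IsAlgClosed k]
    {m d : ℕ} (hd₀ : (d : k) ≠ 0) (hd₁ : (d : k) ≠ 1) {F₁ F₂ : MvPolynomial (Fin m) k}
    (hF₁ : F₁.IsHomogeneous d) (hF₂ : F₂.IsHomogeneous d)
    (H : ∃ M : GL (Fin (m + 1)) k, Set.BijOn (projLinMap M)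
      (projZeroLocus (cyclicCover d F₂)) (projZeroLocus (cyclicCover d F₁))) :
    ∃ M : GL (Fin m) k, Set.BijOn (projLinMap M) (projZeroLocus F₂) (projZeroLocus F₁) := by
  have hd : d ≠ 0 := by rintro rfl; simp at hd₀
  rw [exists_bijOn_projLinMap_iff hd (isHomogeneous_cyclicCover hF₁)
    (isHomogeneous_cyclicCover hF₂)] at H
  rw [exists_bijOn_projLinMap_iff hd hF₁ hF₂]
  obtain ⟨L, hL⟩ := H
  by_cases hF₂₀ : F₂ = 0
  · by_cases hF₁₀ : F₁ = 0
    · exact ⟨.refl k _, by simp [hF₁₀, hF₂₀]⟩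
    · obtain ⟨R, hR⟩ := exists_linearEquiv_eval_eq hd₀ hd₁ hF₁₀ hF₂ hF₁ L.symm
        fun x ↦ by rw [← hL, L.apply_symm_apply]
      exact ⟨R.symm, fun x ↦ by rw [← hR, R.apply_symm_apply]⟩
  · obtain ⟨R, hR⟩ := exists_linearEquiv_eval_eq hd₀ hd₁ hF₂₀ hF₁ hF₂ L hL
    exact ⟨R, fun x ↦ by rw [hR]⟩

/-- If a projective linear automorphism of `ℙ^{n+2}(k)` maps the projective zero locus of
`x_{n+2}^d − F₂` bijectively onto that of `x_{n+2}^d − F₁`, then some projective linear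
automorphism of `ℙ^{n+1}(k)` maps the projective zero locus of `F₂` bijectively onto
that of `F₁`. -/
theorem cyclic_cover_determines_hypersurface_proj
    {k : Type*} [Field k] [IsAlgClosed k] [CharZero k]
    (n d : ℕ) (hn : 2 ≤ n) (hd : 2 ≤ d)
    (F₁ F₂ : MvPolynomial (Fin (n + 2)) k)
    (hF₁ : F₁.IsHomogeneous d) (hF₂ : F₂.IsHomogeneous d)
    (hs₁ : SmoothPoly F₁) (hs₂ : SmoothPoly F₂)
    (H : ∃ M : GL (Fin (n + 3)) k,
      Set.BijOn (projLinMap M)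
        (projZeroLocus (MvPolynomial.X (Fin.last (n + 2)) ^ d -
          MvPolynomial.rename Fin.castSucc F₂))
        (projZeroLocus (MvPolynomial.X (Fin.last (n + 2)) ^ d -
          MvPolynomial.rename Fin.castSucc F₁))) :
    ∃ M' : GL (Fin (n + 2)) k,
      Set.BijOn (projLinMap M') (projZeroLocus F₂) (projZeroLocus F₁) :=
  cyclic_cover_determines_hypersurface_proj_general (by exact_mod_cast (by omega : d ≠ 0))
    (by exact_mod_cast (by omega : d ≠ 1)) hF₁ hF₂ H
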